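/- arXiv:2303.02013 — 2 statements merged into one kernel-verified Lean document; each statement's English description precedes it below -/
import Mathlib

section
/- Let I be an inversive plane of even order q and let x, y be two distinct points of I. Let 𝓒_e be the family of circles C of I such that every circle containing both x and y meets C in exactly one point. Then |𝓒_e| = q − 1, and the circles in 𝓒_e are pairwise disjoint sets whose union is P \ {x,y} (they partition the complement of {x,y} in the point set). -/
/-- An inversive plane of order `q` on a finite point set `P`:
`|P| = q² + 1`, every circle has `q + 1` points, and any three distinct
points lie in exactly one circle. -/
structure InversivePlane (q : ℕ) (P : Type) [Fintype P] where
  two_le : 2 ≤ q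
  circles : Finset (Finset P)
  card_points : Fintype.card P = q ^ 2 + 1
  circle_card : ∀ C ∈ circles, C.card = q + 1
  three_points : ∀ x y z : P, x ≠ y → x ≠ z → y ≠ z →
      ∃! C, C ∈ circles ∧ x ∈ C ∧ y ∈ C ∧ z ∈ C

/-!
For a point `z`, the circles through `z` are the lines of an affine plane of order `q` on the
remaining points, and tangency at `z` is parallelism. A circle `E` avoiding `z` is an oval of this
plane. For even `q` the classical nucleus argument applies: by parity, every point and every
parallel class carries a tangent of `E`, and since there are only `q + 1` tangents, all of them pass
through a common point `n`, so `E` is tangent to every circle through `z` and `n`.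

Two circles of the family for `{x, y}` meeting at `z` would both be tangent at `z` to the circle
through `x`, `y`, `z`, giving two parallel tangents, in the plane at `z`, of another circle through
`x` and `y`. Conversely, among the `q - 1` circles tangent at `z` to the circle `D` through
`x`, `y`, `z`, distinct ones have distinct nuclei with respect to `x`, all lying on `D \ {x, z}`, so
one of them has nucleus `y`. Hence the family partitions the `q² - 1` points other than `x` and `y`.
-/

section Counting

open Finset

variable {α β : Type*}

lemma sum_card_inter_of_existsUnique_mem [DecidableEq α] {F : Finset (Finset α)} {s : Finset α}
    (h : ∀ a ∈ s, ∃! B ∈ F, a ∈ B) : ∑ B ∈ F, #(B ∩ s) = #s := by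
  have hone : ∀ a ∈ s, #{B ∈ F | a ∈ B} = 1 := fun a ha ↦ by
    simpa only [card_eq_one_iff_existsUnique, mem_filter] using h a ha
  simpa only [inter_comm, mul_one] using sum_card_inter hone

lemma card_mul_eq_card_of_existsUnique_mem [DecidableEq α] {F : Finset (Finset α)}
    {s : Finset α} {n : ℕ} (h : ∀ a ∈ s, ∃! B ∈ F, a ∈ B) (hn : ∀ B ∈ F, #(B ∩ s) = n) :
    #F * n = #s := by
  rw [← sum_card_inter_of_existsUnique_mem h, sum_const_nat hn]

lemma exists_card_inter_eq_one_of_odd_card [DecidableEq α] {F : Finset (Finset α)}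
    {s : Finset α} (hs : Odd #s) (h : ∀ a ∈ s, ∃! B ∈ F, a ∈ B)
    (hF : ∀ B ∈ F, #(B ∩ s) ≤ 2) : ∃ B ∈ F, #(B ∩ s) = 1 := by
  rw [← sum_card_inter_of_existsUnique_mem h, odd_sum_iff_odd_card_odd] at hs
  obtain ⟨B, hB⟩ := card_pos.1 hs.pos
  obtain ⟨hBF, k, hk⟩ := mem_filter.1 hB
  have := hF B hBF
  exact ⟨B, hBF, by omega⟩

lemma exists_rel_of_card_le {r : α → β → Prop} {s : Finset α} {t : Finset β} (hcard : #t ≤ #s)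
    (htotal : ∀ a ∈ s, ∃ b ∈ t, r a b)
    (hunique : ∀ b ∈ t, ∀ a ∈ s, ∀ a' ∈ s, r a b → r a' b → a = a') {b : β} (hb : b ∈ t) :
    ∃ a ∈ s, r a b := by
  classical
  by_contra! hmissed
  have hle : #s ≤ #(t.erase b) := by
    refine card_le_card_of_forall_subsingleton r (fun a ha ↦ ?_) fun c hc a ha a' ha' ↦
      hunique c (mem_of_mem_erase hc) a ha.1 a' ha'.1 ha.2 ha'.2
    obtain ⟨c, hc, hac⟩ := htotal a ha
    exact ⟨c, mem_erase.2 ⟨fun h ↦ hmissed a ha (h ▸ hac), hc⟩, hac⟩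
  exact (hle.trans_lt (card_erase_lt_of_mem hb)).not_ge hcard

lemma existsUnique_rel_of_card_le {r : α → β → Prop} {s : Finset α} {t : Finset β}
    (hcard : #t ≤ #s) (htotal : ∀ a ∈ s, ∃ b ∈ t, r a b)
    (hunique : ∀ b ∈ t, ∀ a ∈ s, ∀ a' ∈ s, r a b → r a' b → a = a') {a : α} (ha : a ∈ s) :
    ∃! b ∈ t, r a b := by
  classical
  obtain ⟨b, hb, hab⟩ := htotal a ha
  refine ⟨b, ⟨hb, hab⟩, fun c ⟨hc, hac⟩ ↦ ?_⟩
  by_contra hcb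
  -- `c` is related to `a` only, so the remaining elements of `t` already suffice for all of `s`.
  have hle : #s ≤ #(t.erase c) := by
    refine card_le_card_of_forall_subsingleton r (fun a' ha' ↦ ?_) fun d hd a₁ h₁ a₂ h₂ ↦
      hunique d (mem_of_mem_erase hd) a₁ h₁.1 a₂ h₂.1 h₁.2 h₂.2
    obtain ⟨d, hd, had⟩ := htotal a' ha'
    by_cases hdc : d = c
    · have haa' : a = a' := hunique c hc a ha a' ha' hac (hdc ▸ had)
      exact ⟨b, mem_erase.2 ⟨Ne.symm hcb, hb⟩, haa' ▸ hab⟩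
    · exact ⟨d, mem_erase.2 ⟨hdc, hd⟩, had⟩
  exact (hle.trans_lt (card_erase_lt_of_mem hc)).not_ge hcard

lemma inter_eq_singleton_of_card_inter_eq_one [DecidableEq α] {s t : Finset α} {a : α}
    (hs : a ∈ s) (ht : a ∈ t) (h : #(s ∩ t) = 1) : s ∩ t = {a} :=
  (eq_of_subset_of_card_le (singleton_subset_iff.2 (mem_inter.2 ⟨hs, ht⟩)) h.le).symm

end Counting

namespace InversivePlane

open Finset

variable {q : ℕ} {P : Type} [Fintype P] {I : InversivePlane q P} {x y z p : P}
  {C D E T : Finset P}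

lemma one_lt_card_of_mem_circles (hC : C ∈ I.circles) : 1 < #C := by
  have := I.two_le
  rw [I.circle_card C hC]
  omega

lemma eq_of_two_lt_card_inter [DecidableEq P] (hC : C ∈ I.circles) (hD : D ∈ I.circles)
    (h : 2 < #(C ∩ D)) : C = D := by
  obtain ⟨x, hx, y, hy, z, hz, hxy, hxz, hyz⟩ := two_lt_card.1 h
  rw [mem_inter] at hx hy hz
  exact (I.three_points x y z hxy hxz hyz).unique
    ⟨hC, hx.1, hy.1, hz.1⟩ ⟨hD, hx.2, hy.2, hz.2⟩

lemma card_inter_le_two [DecidableEq P] (hC : C ∈ I.circles) (hD : D ∈ I.circles)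
    (hCD : C ≠ D) : #(C ∩ D) ≤ 2 :=
  not_lt.1 (mt (eq_of_two_lt_card_inter hC hD) hCD)

variable [DecidableEq P]

lemma card_compl_pair (I : InversivePlane q P) (hxy : x ≠ y) :
    #({x, y}ᶜ : Finset P) = (q - 1) * (q + 1) := by
  rw [card_compl, I.card_points, card_pair hxy, mul_comm, ← Nat.sq_sub_sq]
  omega

/-- The pencil of circles with carriers `x` and `y`, i.e. all circles through both points. -/
def pencil (I : InversivePlane q P) (x y : P) : Finset (Finset P) :=
  {D ∈ I.circles | x ∈ D ∧ y ∈ D}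

lemma mem_pencil : D ∈ I.pencil x y ↔ D ∈ I.circles ∧ x ∈ D ∧ y ∈ D := by
  simp only [pencil, mem_filter]

lemma pencil_comm (I : InversivePlane q P) (x y : P) : I.pencil x y = I.pencil y x := by
  simp only [pencil, and_comm]

lemma existsUnique_mem_pencil (I : InversivePlane q P) (hxy : x ≠ y) (hxz : x ≠ z)
    (hyz : y ≠ z) : ∃! D ∈ I.pencil x y, z ∈ D := by
  simpa only [mem_pencil, and_assoc] using I.three_points x y z hxy hxz hyz

lemma card_pencil (I : InversivePlane q P) (hxy : x ≠ y) : #(I.pencil x y) = q + 1 := by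
  have hcover : ∀ z ∈ ({x, y}ᶜ : Finset P), ∃! D ∈ I.pencil x y, z ∈ D := fun z hz ↦ by
    simp only [mem_compl, mem_insert, mem_singleton, not_or] at hz
    exact I.existsUnique_mem_pencil hxy (Ne.symm hz.1) (Ne.symm hz.2)
  have hblock : ∀ D ∈ I.pencil x y, #(D ∩ {x, y}ᶜ) = q - 1 := fun D hD ↦ by
    obtain ⟨hD, hxD, hyD⟩ := mem_pencil.1 hD
    rw [← sdiff_eq_inter_compl, card_sdiff_of_subset (insert_subset hxD (by simpa using hyD)),
      I.circle_card D hD, card_pair hxy]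
    omega
  have hcount := card_mul_eq_card_of_existsUnique_mem hcover hblock
  rw [I.card_compl_pair hxy, mul_comm] at hcount
  have := I.two_le
  exact Nat.eq_of_mul_eq_mul_left (by omega) hcount

/-- The pencil of mutually tangent circles with carrier `z` containing the circle `D` through `z`:
the parallel class of `D` in the affine plane at `z`. -/
def tangentPencil (I : InversivePlane q P) (z : P) (D : Finset P) : Finset (Finset P) :=
  {C ∈ I.circles | C = D ∨ C ∩ D = {z}}

lemma mem_tangentPencil :
    C ∈ I.tangentPencil z D ↔ C ∈ I.circles ∧ (C = D ∨ C ∩ D = {z}) := by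
  simp only [tangentPencil, mem_filter]

lemma self_mem_tangentPencil (hD : D ∈ I.circles) : D ∈ I.tangentPencil z D :=
  mem_tangentPencil.2 ⟨hD, .inl rfl⟩

lemma mem_tangentPencil_comm (hC : C ∈ I.circles) (hD : D ∈ I.circles) :
    C ∈ I.tangentPencil z D ↔ D ∈ I.tangentPencil z C := by
  simp only [mem_tangentPencil, hC, hD, true_and, inter_comm C D, eq_comm (a := C)]

lemma mem_of_mem_tangentPencil (hz : z ∈ D) (hC : C ∈ I.tangentPencil z D) : z ∈ C := by
  obtain rfl | h := (mem_tangentPencil.1 hC).2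
  · exact hz
  · exact mem_of_mem_inter_left (h ▸ mem_singleton_self z)

lemma eq_of_mem_tangentPencil_of_mem (hC : C ∈ I.tangentPencil z D) (hpz : p ≠ z)
    (hpC : p ∈ C) (hpD : p ∈ D) : C = D :=
  (mem_tangentPencil.1 hC).2.resolve_right fun h ↦
    hpz (mem_singleton.1 (h ▸ mem_inter.2 ⟨hpC, hpD⟩))

lemma card_inter_erase_eq_one (hT : T ∈ I.circles) (hD : D ∈ I.circles) (hTD : T ≠ D)
    (hzT : z ∈ T) (hzD : z ∈ D) (h : T ∩ D ≠ {z}) : #(T ∩ D.erase z) = 1 := by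
  have hz : z ∈ T ∩ D := mem_inter.2 ⟨hzT, hzD⟩
  have hle := card_inter_le_two hT hD hTD
  have hne : #(T ∩ D) ≠ 1 := fun h1 ↦ h (inter_eq_singleton_of_card_inter_eq_one hzT hzD h1)
  have hpos := card_pos.2 ⟨z, hz⟩
  rw [inter_erase, card_erase_of_mem hz]
  omega

lemma card_filter_pencil_inter_eq_singleton_eq_one (hD : D ∈ I.circles) (hz : z ∈ D) (hp : p ∉ D) :
    #{T ∈ I.pencil z p | T ∩ D = {z}} = 1 := by
  have hzp : z ≠ p := fun h ↦ hp (h ▸ hz)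
  have hcover : ∀ d ∈ D.erase z, ∃! T ∈ {T ∈ I.pencil z p | ¬ T ∩ D = {z}}, d ∈ T := by
    intro d hd
    obtain ⟨hdz, hdD⟩ := mem_erase.1 hd
    obtain ⟨T, ⟨hT, hdT⟩, hunique⟩ :=
      I.existsUnique_mem_pencil hzp (Ne.symm hdz) (fun h ↦ hp (h ▸ hdD))
    refine ⟨T, ⟨mem_filter.2 ⟨hT, fun h ↦ hdz ?_⟩, hdT⟩, fun T' h ↦
      hunique T' ⟨(mem_filter.1 h.1).1, h.2⟩⟩
    exact mem_singleton.1 (h ▸ mem_inter.2 ⟨hdT, hdD⟩)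
  have hblock : ∀ T ∈ {T ∈ I.pencil z p | ¬ T ∩ D = {z}}, #(T ∩ D.erase z) = 1 := by
    intro T h
    obtain ⟨hT, hTD⟩ := mem_filter.1 h
    obtain ⟨hT, hzT, hpT⟩ := mem_pencil.1 hT
    exact card_inter_erase_eq_one hT hD (fun h ↦ hp (h ▸ hpT)) hzT hz hTD
  have hsecants := card_mul_eq_card_of_existsUnique_mem hcover hblock
  have htotal := card_filter_add_card_filter_not (s := I.pencil z p) (fun T ↦ T ∩ D = {z})
  rw [card_erase_of_mem hz, I.circle_card D hD] at hsecants
  rw [I.card_pencil hzp] at htotal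
  omega

lemma existsUnique_mem_tangentPencil (hD : D ∈ I.circles) (hz : z ∈ D) (hpz : p ≠ z) :
    ∃! T ∈ I.tangentPencil z D, p ∈ T := by
  by_cases hp : p ∈ D
  · exact ⟨D, ⟨self_mem_tangentPencil hD, hp⟩, fun T ⟨hT, hpT⟩ ↦
      eq_of_mem_tangentPencil_of_mem hT hpz hpT hp⟩
  · obtain ⟨T, hT, hunique⟩ :=
      card_eq_one_iff_existsUnique.1 (card_filter_pencil_inter_eq_singleton_eq_one hD hz hp)
    obtain ⟨hT, hTD⟩ := mem_filter.1 hT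
    obtain ⟨hT, -, hpT⟩ := mem_pencil.1 hT
    refine ⟨T, ⟨mem_tangentPencil.2 ⟨hT, .inr hTD⟩, hpT⟩, fun T' ⟨hT', hpT'⟩ ↦
      hunique T' (mem_filter.2 ⟨mem_pencil.2 ⟨(mem_tangentPencil.1 hT').1,
        mem_of_mem_tangentPencil hz hT', hpT'⟩, ?_⟩)⟩
    exact (mem_tangentPencil.1 hT').2.resolve_left fun h ↦ hp (h ▸ hpT')

lemma card_tangentPencil (hD : D ∈ I.circles) (hz : z ∈ D) : #(I.tangentPencil z D) = q := by
  have hcover : ∀ p ∈ ({z}ᶜ : Finset P), ∃! T ∈ I.tangentPencil z D, p ∈ T := fun p hp ↦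
    existsUnique_mem_tangentPencil hD hz (by simpa using hp)
  have hblock : ∀ T ∈ I.tangentPencil z D, #(T ∩ {z}ᶜ) = q := fun T hT ↦ by
    have hzT := mem_of_mem_tangentPencil hz hT
    rw [← sdiff_eq_inter_compl, card_sdiff_of_subset (by simpa using hzT),
      I.circle_card T (mem_tangentPencil.1 hT).1, card_singleton, Nat.add_sub_cancel]
  have hcount := card_mul_eq_card_of_existsUnique_mem hcover hblock
  rw [card_compl, I.card_points, card_singleton, Nat.add_sub_cancel, sq] at hcount
  have := I.two_le
  exact Nat.eq_of_mul_eq_mul_right (by omega) hcount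

/-- The circles through `z` tangent to `E`: the tangents of the oval `E` in the affine plane at `z`
when `E` is a circle avoiding `z`. -/
def tangentsThrough (I : InversivePlane q P) (z : P) (E : Finset P) : Finset (Finset P) :=
  {T ∈ I.circles | z ∈ T ∧ #(T ∩ E) = 1}

lemma mem_tangentsThrough :
    T ∈ I.tangentsThrough z E ↔ T ∈ I.circles ∧ z ∈ T ∧ #(T ∩ E) = 1 := by
  simp only [tangentsThrough, mem_filter]

lemma existsUnique_mem_tangentsThrough (hE : E ∈ I.circles) (hz : z ∉ E) (hp : p ∈ E) :
    ∃! T ∈ I.tangentsThrough z E, p ∈ T := by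
  have hzp : z ≠ p := fun h ↦ hz (h ▸ hp)
  obtain ⟨T, ⟨hT, hzT⟩, hunique⟩ := existsUnique_mem_tangentPencil hE hp hzp
  have hTE : T ∩ E = {p} :=
    (mem_tangentPencil.1 hT).2.resolve_left fun h ↦ hz (h ▸ hzT)
  refine ⟨T, ⟨mem_tangentsThrough.2 ⟨(mem_tangentPencil.1 hT).1, hzT, by
    rw [hTE, card_singleton]⟩, mem_of_mem_tangentPencil hp hT⟩, fun T' ⟨hT', hpT'⟩ ↦ ?_⟩
  obtain ⟨hT', hzT', hcard⟩ := mem_tangentsThrough.1 hT'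
  exact hunique T' ⟨mem_tangentPencil.2 ⟨hT', .inr <|
    inter_eq_singleton_of_card_inter_eq_one hpT' hp hcard⟩, hzT'⟩

lemma card_tangentsThrough (hE : E ∈ I.circles) (hz : z ∉ E) :
    #(I.tangentsThrough z E) = q + 1 := by
  have hcount := card_mul_eq_card_of_existsUnique_mem
    (fun _ ↦ existsUnique_mem_tangentsThrough hE hz) fun T hT ↦ (mem_tangentsThrough.1 hT).2.2
  rwa [mul_one, I.circle_card E hE] at hcount

lemma exists_mem_tangentsThrough_of_existsUnique_mem (hq : Even q) (hE : E ∈ I.circles)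
    (hz : z ∉ E) {F : Finset (Finset P)} (hF : ∀ T ∈ F, T ∈ I.circles ∧ z ∈ T)
    (hcover : ∀ p ∈ E, ∃! T ∈ F, p ∈ T) : ∃ T ∈ F, T ∈ I.tangentsThrough z E := by
  have hodd : Odd #E := I.circle_card E hE ▸ hq.add_one
  obtain ⟨T, hT, hTE⟩ := exists_card_inter_eq_one_of_odd_card hodd hcover fun T hT ↦
    card_inter_le_two (hF T hT).1 hE fun h ↦ hz (h ▸ (hF T hT).2)
  exact ⟨T, hT, mem_tangentsThrough.2 ⟨(hF T hT).1, (hF T hT).2, hTE⟩⟩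

lemma exists_mem_tangentsThrough_mem (hq : Even q) (hE : E ∈ I.circles) (hz : z ∉ E)
    (hpz : p ≠ z) : ∃ T ∈ I.tangentsThrough z E, p ∈ T := by
  by_cases hp : p ∈ E
  · exact (existsUnique_mem_tangentsThrough hE hz hp).exists
  · obtain ⟨T, hT, hTE⟩ := exists_mem_tangentsThrough_of_existsUnique_mem hq hE hz
      (F := I.pencil z p) (fun T hT ↦ ⟨(mem_pencil.1 hT).1, (mem_pencil.1 hT).2.1⟩)
      fun e he ↦ I.existsUnique_mem_pencil hpz.symm (fun h ↦ hz (h ▸ he)) fun h ↦ hp (h ▸ he)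
    exact ⟨T, hTE, (mem_pencil.1 hT).2.2⟩

lemma exists_mem_tangentsThrough_mem_tangentPencil (hq : Even q) (hE : E ∈ I.circles)
    (hzE : z ∉ E) (hD : D ∈ I.circles) (hzD : z ∈ D) :
    ∃ T ∈ I.tangentsThrough z E, T ∈ I.tangentPencil z D := by
  obtain ⟨T, hT, hTE⟩ := exists_mem_tangentsThrough_of_existsUnique_mem hq hE hzE
    (F := I.tangentPencil z D)
    (fun T hT ↦ ⟨(mem_tangentPencil.1 hT).1, mem_of_mem_tangentPencil hzD hT⟩)
    fun e he ↦ existsUnique_mem_tangentPencil hD hzD fun h ↦ hzE (h ▸ he)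
  exact ⟨T, hTE, hT⟩

lemma existsUnique_mem_tangentsThrough_mem_tangentPencil (hq : Even q) (hE : E ∈ I.circles)
    (hzE : z ∉ E) (hD : D ∈ I.circles) (hzD : z ∈ D) :
    ∃! T ∈ I.tangentsThrough z E, T ∈ I.tangentPencil z D := by
  obtain ⟨p, hpD, hpz⟩ := exists_mem_ne (one_lt_card_of_mem_circles hD) z
  -- The pencil with carriers `z` and `p` meets each of the `q + 1` parallel classes at `z` once.
  refine existsUnique_rel_of_card_le (s := I.pencil z p) (r := fun D T ↦ T ∈ I.tangentPencil z D)
    ?_ (fun D' hD' ↦ ?_) (fun T hT D₁ h₁ D₂ h₂ hTD₁ hTD₂ ↦ ?_) (mem_pencil.2 ⟨hD, hzD, hpD⟩)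
  · rw [card_tangentsThrough hE hzE, I.card_pencil hpz.symm]
  · obtain ⟨hD', hzD', -⟩ := mem_pencil.1 hD'
    exact exists_mem_tangentsThrough_mem_tangentPencil hq hE hzE hD' hzD'
  · obtain ⟨hT, hzT, -⟩ := mem_tangentsThrough.1 hT
    obtain ⟨h₁, -, hp₁⟩ := mem_pencil.1 h₁
    obtain ⟨h₂, -, hp₂⟩ := mem_pencil.1 h₂
    exact (existsUnique_mem_tangentPencil hT hzT hpz).unique
      ⟨(mem_tangentPencil_comm hT h₁).1 hTD₁, hp₁⟩ ⟨(mem_tangentPencil_comm hT h₂).1 hTD₂, hp₂⟩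

lemma exists_ne_mem_mem_of_mem_tangentsThrough (hq : Even q) (hE : E ∈ I.circles) (hz : z ∉ E)
    {T₁ T₂ : Finset P} (h₁ : T₁ ∈ I.tangentsThrough z E) (h₂ : T₂ ∈ I.tangentsThrough z E)
    (hne : T₁ ≠ T₂) : ∃ p ≠ z, p ∈ T₁ ∧ p ∈ T₂ := by
  obtain ⟨hT₁, hzT₁, -⟩ := mem_tangentsThrough.1 h₁
  obtain ⟨hT₂, hzT₂, -⟩ := mem_tangentsThrough.1 h₂
  by_contra! hdisj
  have hinter : T₂ ∩ T₁ = {z} := eq_singleton_iff_unique_mem.2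
    ⟨mem_inter.2 ⟨hzT₂, hzT₁⟩, fun p hp ↦ by_contra fun hpz ↦
      hdisj p hpz (mem_inter.1 hp).2 (mem_inter.1 hp).1⟩
  exact hne <| (existsUnique_mem_tangentsThrough_mem_tangentPencil hq hE hz hT₁ hzT₁).unique
    ⟨h₁, self_mem_tangentPencil hT₁⟩ ⟨h₂, mem_tangentPencil.2 ⟨hT₂, .inr hinter⟩⟩

lemma exists_mem_tangentsThrough_inter_eq_pair (hq : Even q) (hE : E ∈ I.circles) (hzE : z ∉ E)
    (hD : D ∈ I.circles) (hzD : z ∈ D) (hDE : D ∉ I.tangentsThrough z E) (hp : p ∈ D) :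
    ∃ T ∈ I.tangentsThrough z E, T ∩ D = {z, p} := by
  by_cases hpz : p = z
  · obtain ⟨T, hT, hTD⟩ := exists_mem_tangentsThrough_mem_tangentPencil hq hE hzE hD hzD
    refine ⟨T, hT, ?_⟩
    rw [hpz, pair_eq_singleton]
    exact (mem_tangentPencil.1 hTD).2.resolve_left fun h ↦ hDE (h ▸ hT)
  · obtain ⟨T, hT, hpT⟩ := exists_mem_tangentsThrough_mem hq hE hzE hpz
    obtain ⟨hTc, hzT, -⟩ := mem_tangentsThrough.1 hT
    refine ⟨T, hT, (eq_of_subset_of_card_le ?_ ?_).symm⟩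
    · simp only [insert_subset_iff, singleton_subset_iff, mem_inter]
      exact ⟨⟨hzT, hzD⟩, hpT, hp⟩
    · rw [card_pair (Ne.symm hpz)]
      exact card_inter_le_two hTc hD fun h ↦ hDE (h ▸ hT)

lemma eq_of_mem_tangentsThrough_of_notMem (hq : Even q) (hE : E ∈ I.circles) (hzE : z ∉ E)
    (hD : D ∈ I.circles) (hzD : z ∈ D) (hDE : D ∉ I.tangentsThrough z E) (hpz : p ≠ z)
    (hpD : p ∈ D) {T₁ T₂ : Finset P} (h₁ : T₁ ∈ I.tangentsThrough z E)
    (h₂ : T₂ ∈ I.tangentsThrough z E) (hp₁ : p ∈ T₁) (hp₂ : p ∈ T₂) : T₁ = T₂ := by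
  have hcard : #(I.tangentsThrough z E) ≤ #D := by
    rw [card_tangentsThrough hE hzE, I.circle_card D hD]
  have htotal : ∀ p ∈ D, ∃ T ∈ I.tangentsThrough z E, T ∩ D = {z, p} := fun p ↦
    exists_mem_tangentsThrough_inter_eq_pair hq hE hzE hD hzD hDE
  have hunique : ∀ T ∈ I.tangentsThrough z E, ∀ a ∈ D, ∀ a' ∈ D,
      T ∩ D = {z, a} → T ∩ D = {z, a'} → a = a' := fun T _ a _ a' _ ha ha' ↦ by
    rw [ha, ← coe_inj, coe_pair, coe_pair, Set.pair_eq_pair_iff] at ha'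
    exact ha'.elim And.right fun h ↦ h.2.trans h.1
  have hpair : ∀ T ∈ I.tangentsThrough z E, p ∈ T → T ∩ D = {z, p} := fun T hT hpT ↦ by
    obtain ⟨a, -, ha⟩ := exists_rel_of_card_le hcard htotal hunique hT
    have hmem : p ∈ ({z, a} : Finset P) := ha ▸ mem_inter.2 ⟨hpT, hpD⟩
    obtain rfl : p = a := by simpa [hpz] using hmem
    exact ha
  exact (existsUnique_rel_of_card_le hcard htotal hunique hpD).unique
    ⟨h₁, hpair T₁ h₁ hp₁⟩ ⟨h₂, hpair T₂ h₂ hp₂⟩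

theorem exists_tangentsThrough_eq_pencil (hq : Even q) (hE : E ∈ I.circles) (hz : z ∉ E) :
    ∃ n ≠ z, I.tangentsThrough z E = I.pencil z n := by
  have hcard : 1 < #(I.tangentsThrough z E) := by
    have := I.two_le
    rw [card_tangentsThrough hE hz]
    omega
  obtain ⟨T₁, h₁, T₂, h₂, hne⟩ := one_lt_card.1 hcard
  obtain ⟨n, hnz, hn₁, hn₂⟩ := exists_ne_mem_mem_of_mem_tangentsThrough hq hE hz h₁ h₂ hne
  refine ⟨n, hnz, (eq_of_subset_of_card_le (fun D hD ↦ ?_) ?_).symm⟩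
  · obtain ⟨hD, hzD, hnD⟩ := mem_pencil.1 hD
    by_contra hDE
    exact hne (eq_of_mem_tangentsThrough_of_notMem hq hE hz hD hzD hDE hnz hnD h₁ h₂ hn₁ hn₂)
  · rw [card_tangentsThrough hE hz, I.card_pencil hnz.symm]

/-- The family `𝓒ₑ` of the circles tangent to every circle through `x` and `y`. -/
def commonTangents (I : InversivePlane q P) (x y : P) : Finset (Finset P) :=
  {C ∈ I.circles | ∀ D ∈ I.circles, x ∈ D → y ∈ D → #(D ∩ C) = 1}

lemma mem_commonTangents :
    C ∈ I.commonTangents x y ↔ C ∈ I.circles ∧ ∀ D ∈ I.pencil x y, #(D ∩ C) = 1 := by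
  simp only [commonTangents, mem_filter, mem_pencil, and_imp]

lemma commonTangents_comm (I : InversivePlane q P) (x y : P) :
    I.commonTangents x y = I.commonTangents y x := by
  ext C
  rw [mem_commonTangents, mem_commonTangents, pencil_comm]

lemma left_notMem_of_mem_commonTangents (hxy : x ≠ y) (hC : C ∈ I.commonTangents x y) :
    x ∉ C := by
  intro hx
  obtain ⟨hC, htangent⟩ := mem_commonTangents.1 hC
  have hcard : #{x, y} < #C := by
    have := I.two_le
    rw [card_pair hxy, I.circle_card C hC]
    omega
  obtain ⟨p, hpC, hp⟩ := exists_mem_notMem_of_card_lt_card hcard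
  simp only [mem_insert, mem_singleton, not_or] at hp
  obtain ⟨D, hD, hpD⟩ := (I.existsUnique_mem_pencil hxy (Ne.symm hp.1) (Ne.symm hp.2)).exists
  have hinter : D ∩ C = {x} :=
    inter_eq_singleton_of_card_inter_eq_one (mem_pencil.1 hD).2.1 hx (htangent D hD)
  exact hp.1 (mem_singleton.1 (hinter ▸ mem_inter.2 ⟨hpD, hpC⟩))

lemma ne_and_ne_of_mem_commonTangents (hxy : x ≠ y) (hC : C ∈ I.commonTangents x y)
    (hz : z ∈ C) : x ≠ z ∧ y ≠ z :=
  ⟨fun h ↦ left_notMem_of_mem_commonTangents hxy hC (h ▸ hz), fun h ↦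
    left_notMem_of_mem_commonTangents hxy.symm (I.commonTangents_comm x y ▸ hC) (h ▸ hz)⟩

lemma mem_tangentsThrough_of_mem_commonTangents (hC : C ∈ I.commonTangents x y)
    (hD : D ∈ I.pencil x y) (hz : z ∈ C) : C ∈ I.tangentsThrough z D :=
  mem_tangentsThrough.2 ⟨(mem_commonTangents.1 hC).1, hz,
    inter_comm C D ▸ (mem_commonTangents.1 hC).2 D hD⟩

lemma mem_tangentPencil_of_mem_commonTangents (hC : C ∈ I.commonTangents x y)
    (hD : D ∈ I.pencil x y) (hzC : z ∈ C) (hzD : z ∈ D) : C ∈ I.tangentPencil z D :=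
  mem_tangentPencil.2 ⟨(mem_commonTangents.1 hC).1, .inr <|
    inter_eq_singleton_of_card_inter_eq_one hzC hzD <|
      inter_comm C D ▸ (mem_commonTangents.1 hC).2 D hD⟩

theorem eq_of_mem_commonTangents (hq : Even q) (hxy : x ≠ y) {C₁ C₂ : Finset P}
    (h₁ : C₁ ∈ I.commonTangents x y) (h₂ : C₂ ∈ I.commonTangents x y)
    (hz₁ : z ∈ C₁) (hz₂ : z ∈ C₂) : C₁ = C₂ := by
  obtain ⟨hxz, hyz⟩ := ne_and_ne_of_mem_commonTangents hxy h₁ hz₁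
  obtain ⟨D, ⟨hD, hzD⟩, hunique⟩ := I.existsUnique_mem_pencil hxy hxz hyz
  have hcard : 1 < #(I.pencil x y) := by
    have := I.two_le
    rw [I.card_pencil hxy]
    omega
  obtain ⟨E, hE, hED⟩ := exists_mem_ne hcard D
  have hzE : z ∉ E := fun h ↦ hED (hunique E ⟨hE, h⟩)
  exact (existsUnique_mem_tangentsThrough_mem_tangentPencil hq (mem_pencil.1 hE).1 hzE
    (mem_pencil.1 hD).1 hzD).unique
    ⟨mem_tangentsThrough_of_mem_commonTangents h₁ hE hz₁,
      mem_tangentPencil_of_mem_commonTangents h₁ hD hz₁ hzD⟩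
    ⟨mem_tangentsThrough_of_mem_commonTangents h₂ hE hz₂,
      mem_tangentPencil_of_mem_commonTangents h₂ hD hz₂ hzD⟩

lemma exists_mem_erase_erase_mem_commonTangents (hq : Even q) (hD : D ∈ I.circles) (hxD : x ∈ D)
    (hzD : z ∈ D) (hxz : x ≠ z) (hC : C ∈ (I.tangentPencil z D).erase D) :
    ∃ n ∈ (D.erase x).erase z, C ∈ I.commonTangents x n := by
  obtain ⟨hCD, hCmem⟩ := mem_erase.1 hC
  obtain ⟨hC, hinter⟩ := mem_tangentPencil.1 hCmem
  have hxC : x ∉ C := fun h ↦ hCD (eq_of_mem_tangentPencil_of_mem hCmem hxz h hxD)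
  obtain ⟨n, hnx, hn⟩ := exists_tangentsThrough_eq_pencil hq hC hxC
  have hCn : C ∈ I.commonTangents x n := mem_commonTangents.2
    ⟨hC, fun T hT ↦ (mem_tangentsThrough.1 (hn ▸ hT)).2.2⟩
  have hDn : D ∈ I.pencil x n := by
    rw [← hn, mem_tangentsThrough, inter_comm, hinter.resolve_left hCD]
    exact ⟨hD, hxD, card_singleton z⟩
  have hnz : n ≠ z := (ne_and_ne_of_mem_commonTangents hnx.symm hCn
    (mem_of_mem_tangentPencil hzD hCmem)).2
  exact ⟨n, mem_erase.2 ⟨hnz, mem_erase.2 ⟨hnx, (mem_pencil.1 hDn).2.2⟩⟩, hCn⟩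

theorem exists_mem_commonTangents (hq : Even q) (I : InversivePlane q P) (hxy : x ≠ y)
    (hxz : x ≠ z) (hyz : y ≠ z) : ∃ C ∈ I.commonTangents x y, z ∈ C := by
  obtain ⟨D, hDxy, hzD⟩ := (I.existsUnique_mem_pencil hxy hxz hyz).exists
  obtain ⟨hD, hxD, hyD⟩ := mem_pencil.1 hDxy
  have hzmem : ∀ C ∈ (I.tangentPencil z D).erase D, z ∈ C := fun C hC ↦
    mem_of_mem_tangentPencil hzD (mem_of_mem_erase hC)
  have hcard : #((D.erase x).erase z) ≤ #((I.tangentPencil z D).erase D) := by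
    rw [card_erase_of_mem (mem_erase.2 ⟨hxz.symm, hzD⟩), card_erase_of_mem hxD,
      card_erase_of_mem (self_mem_tangentPencil hD), card_tangentPencil hD hzD,
      I.circle_card D hD, Nat.add_sub_cancel]
  obtain ⟨C, hC, hCy⟩ := exists_rel_of_card_le hcard (r := fun C n ↦ C ∈ I.commonTangents x n)
    (fun C ↦ exists_mem_erase_erase_mem_commonTangents hq hD hxD hzD hxz)
    (fun n hn C₁ h₁ C₂ h₂ h₁n h₂n ↦ eq_of_mem_commonTangents hq
      (ne_of_mem_erase (mem_of_mem_erase hn)).symm h₁n h₂n (hzmem C₁ h₁) (hzmem C₂ h₂))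
    (mem_erase.2 ⟨hyz, mem_erase.2 ⟨hxy.symm, hyD⟩⟩)
  exact ⟨C, hCy, hzmem C hC⟩

theorem biUnion_commonTangents (hq : Even q) (I : InversivePlane q P) (hxy : x ≠ y) :
    (I.commonTangents x y).biUnion id = {x, y}ᶜ := by
  ext z
  simp only [mem_biUnion, id, mem_compl, mem_insert, mem_singleton, not_or, eq_comm (a := z)]
  exact ⟨fun ⟨_, hC, hz⟩ ↦ ne_and_ne_of_mem_commonTangents hxy hC hz, fun ⟨hxz, hyz⟩ ↦
    exists_mem_commonTangents hq I hxy hxz hyz⟩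

theorem card_commonTangents (hq : Even q) (I : InversivePlane q P) (hxy : x ≠ y) :
    #(I.commonTangents x y) = q - 1 := by
  have hcover : ∀ z ∈ ({x, y}ᶜ : Finset P), ∃! C ∈ I.commonTangents x y, z ∈ C := fun z hz ↦ by
    rw [← biUnion_commonTangents hq I hxy, mem_biUnion] at hz
    obtain ⟨C, hC, hzC⟩ := hz
    exact ⟨C, ⟨hC, hzC⟩, fun C' h ↦ eq_of_mem_commonTangents hq hxy h.1 hC h.2 hzC⟩
  have hblock : ∀ C ∈ I.commonTangents x y, #(C ∩ {x, y}ᶜ) = q + 1 := fun C hC ↦ by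
    have hsub : C ⊆ {x, y}ᶜ := biUnion_commonTangents hq I hxy ▸ subset_biUnion_of_mem id hC
    rw [inter_eq_left.2 hsub, I.circle_card C (mem_commonTangents.1 hC).1]
  have hcount := card_mul_eq_card_of_existsUnique_mem hcover hblock
  rw [I.card_compl_pair hxy] at hcount
  exact Nat.eq_of_mul_eq_mul_right q.succ_pos hcount

end InversivePlane

/-- In an inversive plane of even order `q`, for two distinct points `x, y`,
the family `𝓒ₑ` of circles `C` tangent to every circle through `x` and `y`
has exactly `q - 1` members, and these circles are pairwise disjoint with
union the complement of `{x, y}`. -/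
theorem tangent_circles_of_point_pair
    {q : ℕ} {P : Type} [Fintype P] [DecidableEq P]
    (hq : Even q) (I : InversivePlane q P) (x y : P) (hxy : x ≠ y)
    (Ce : Finset (Finset P))
    (hCe : Ce = I.circles.filter
      (fun C => ∀ D ∈ I.circles, x ∈ D → y ∈ D → (D ∩ C).card = 1)) :
    Ce.card = q - 1 ∧
    (∀ C₁ ∈ Ce, ∀ C₂ ∈ Ce, C₁ ≠ C₂ → C₁ ∩ C₂ = ∅) ∧
    Ce.biUnion id = Finset.univ \ {x, y} := by
  obtain rfl : Ce = I.commonTangents x y := hCe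
  refine ⟨I.card_commonTangents hq hxy, fun C₁ h₁ C₂ h₂ hne ↦ ?_, ?_⟩
  · refine Finset.eq_empty_of_forall_notMem fun z hz ↦ hne ?_
    obtain ⟨hz₁, hz₂⟩ := Finset.mem_inter.1 hz
    exact InversivePlane.eq_of_mem_commonTangents hq hxy h₁ h₂ hz₁ hz₂
  · rw [I.biUnion_commonTangents hq hxy, Finset.compl_eq_univ_sdiff]
end

section
/- Let F be a finite field with q elements and B a nondegenerate alternating bilinear form on V = F⁴. Then W(q) is a regular generalized quadrangle of order (q,q); explicitly: (1) every totally isotropic two-dimensional subspace of V contains exactly q+1 points of ℙ(F, V); (2) every point of ℙ(F, V) is contained in exactly q+1 totally isotropic two-dimensional subspaces; (3) any two distinct points of ℙ(F, V) lie in at most one common totally isotropic two-dimensional subspace; (4) for every point x and totally isotropic two-dimensional subspace ℓ not containing x, there is a unique point y in ℓ collinear with x; and (5) every pair of non-collinear points of W(q) is regular. -/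
/-!
Everything is read off from the lattice of subspaces, with `y` collinear with `x` exactly when
`y ≤ xᗮ`. If `x` and `y` are not collinear then `x ⊔ y` is a hyperbolic line, disjoint from
its orthogonal complement `N`, and `N` is again two-dimensional.

* The lines through `x` are the `x ⊔ p` for `p` a point of `N`: a line `M` through `x` is not
  contained in the hyperplane `yᗮ`, and `M ⊓ yᗮ` is the point `p`.
* A line `M` is its own orthogonal complement, so a point `x` off `M` has `xᗮ ⊓ M ≠ M`, and
  `xᗮ ⊓ M` is the only point of `M` collinear with `x`.
* The trace of `{x, y}` consists of the points of `N`, so its span consists of the points of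
  `Nᗮ = x ⊔ y`.

All three counts therefore reduce to the number of points of a two-dimensional subspace.
-/

open Module
open LinearMap (BilinForm ker)
open scoped LinearAlgebra.Projectivization

section Points

variable {F V W : Type*} [DivisionRing F] [AddCommGroup V] [Module F V]
  [AddCommGroup W] [Module F W]

lemma submodule_le_iff_rep_mem {x : ℙ F V} {M : Submodule F V} : x.submodule ≤ M ↔ x.rep ∈ M := by
  rw [x.submodule_eq, Submodule.span_singleton_le_iff_mem]

lemma le_iff_forall_point_le {M N : Submodule F V} :
    M ≤ N ↔ ∀ x : ℙ F V, x.submodule ≤ M → x.submodule ≤ N := by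
  simp only [← Submodule.mem_projectivization_iff_submodule_le]
  exact Submodule.projectivization.le_iff_le.symm

lemma disjoint_submodule_of_ne {x y : ℙ F V} (h : x ≠ y) : Disjoint x.submodule y.submodule :=
  (Submodule.isAtom_iff_finrank_eq_one.2 x.finrank_submodule).disjoint_of_ne
    (Submodule.isAtom_iff_finrank_eq_one.2 y.finrank_submodule)
    (Projectivization.submodule_injective.ne h)

lemma finrank_sup_submodule_of_ne {x y : ℙ F V} (h : x ≠ y) :
    finrank F ↥(x.submodule ⊔ y.submodule) = 2 := by
  have hdim := Submodule.finrank_sup_add_finrank_inf_eq x.submodule y.submodule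
  rwa [(disjoint_submodule_of_ne h).eq_bot, finrank_bot, x.finrank_submodule,
    y.finrank_submodule] at hdim

lemma eq_sup_submodule {x y : ℙ F V} (h : x ≠ y) {M : Submodule F V} (hM : finrank F M = 2)
    (hx : x.submodule ≤ M) (hy : y.submodule ≤ M) : M = x.submodule ⊔ y.submodule :=
  have : FiniteDimensional F M := Module.finite_of_finrank_eq_succ hM
  (Submodule.eq_of_le_of_finrank_eq (sup_le hx hy)
    ((finrank_sup_submodule_of_ne h).trans hM.symm)).symm

lemma existsUnique_point_le {L : Submodule F V} (hL : finrank F L = 1) :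
    ∃! x : ℙ F V, x.submodule ≤ L := by
  have : FiniteDimensional F L := Module.finite_of_finrank_eq_succ hL
  refine ⟨.mk'' L hL, (Projectivization.submodule_mk'' L hL).le, fun y hy ↦ ?_⟩
  apply Projectivization.submodule_injective
  rw [Projectivization.submodule_mk'']
  exact Submodule.eq_of_le_of_finrank_eq hy (y.finrank_submodule.trans hL.symm)

lemma range_projectivization_map (f : W →ₗ[F] V) (hf : Function.Injective f) :
    Set.range (Projectivization.map f hf) = {x | x.submodule ≤ f.range} := by
  ext x
  rw [Set.mem_range, Set.mem_ofPred_eq, submodule_le_iff_rep_mem]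
  constructor
  · rintro ⟨y, rfl⟩
    rw [← submodule_le_iff_rep_mem, ← y.mk_rep, Projectivization.map_mk,
      Projectivization.submodule_mk, Submodule.span_singleton_le_iff_mem]
    exact ⟨y.rep, rfl⟩
  · rintro ⟨w, hw⟩
    have hw0 : w ≠ 0 := fun h ↦ x.rep_nonzero (by rw [← hw, h, map_zero])
    refine ⟨.mk F w hw0, ?_⟩
    simp only [Projectivization.map_mk, hw, x.mk_rep]

lemma enatCard_projectiveLine : ENat.card (ℙ F (Fin 2 → F)) = ENat.card F + 1 := by
  classical
  calc ENat.card (ℙ F (Fin 2 → F)) = ENat.card (F ⊕ Unit) :=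
        ENat.card_congr
          ((OnePoint.equivProjectivization F).symm.trans (Equiv.optionEquivSumPUnit F))
    _ = ENat.card F + 1 := by rw [ENat.card_sum, ENat.card_eq_coe_fintype_card (α := Unit),
        Fintype.card_unit, Nat.cast_one]

lemma encard_points_of_finrank_eq_two {M : Submodule F V} (hM : finrank F M = 2) :
    {x : ℙ F V | x.submodule ≤ M}.encard = ENat.card F + 1 := by
  have : FiniteDimensional F M := Module.finite_of_finrank_eq_succ hM
  let e : (Fin 2 → F) ≃ₗ[F] M := LinearEquiv.ofFinrankEq _ _ ((finrank_fin_fun F).trans hM.symm)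
  have he : Function.Injective (M.subtype ∘ₗ (e : (Fin 2 → F) →ₗ[F] M)) :=
    M.injective_subtype.comp e.injective
  have hrange : (M.subtype ∘ₗ (e : (Fin 2 → F) →ₗ[F] M)).range = M := by
    rw [LinearEquiv.range_comp, M.range_subtype]
  conv_lhs => rw [← hrange]
  rw [← range_projectivization_map _ he, ← Set.image_univ,
    (Projectivization.map_injective _ he).encard_image, Set.encard_univ, enatCard_projectiveLine]

end Points

section Orthogonality

variable {F V : Type*} [Field F] [AddCommGroup V] [Module F V] {B : BilinForm F V}
  {M N : Submodule F V} {x y : ℙ F V}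

lemma le_orthogonal_comm (hB : B.IsRefl) : M ≤ B.orthogonal N ↔ N ≤ B.orthogonal M :=
  ⟨fun h n hn m hm ↦ hB n m (h hm n hn), fun h m hm n hn ↦ hB m n (h hn m hm)⟩

lemma orthogonal_sup (B : BilinForm F V) (M N : Submodule F V) :
    B.orthogonal (M ⊔ N) = B.orthogonal M ⊓ B.orthogonal N := by
  ext v
  exact sup_le_iff (c := ker (B.flip v))

lemma orthogonal_submodule_eq_ker (B : BilinForm F V) (x : ℙ F V) :
    B.orthogonal x.submodule = ker (B x.rep) := by
  rw [x.submodule_eq]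
  exact LinearMap.BilinForm.orthogonal_span_singleton_eq_toLin_ker x.rep

lemma submodule_le_orthogonal_submodule :
    y.submodule ≤ B.orthogonal x.submodule ↔ B x.rep y.rep = 0 := by
  rw [orthogonal_submodule_eq_ker, submodule_le_iff_rep_mem, LinearMap.mem_ker]

lemma submodule_le_orthogonal_self (hB : B.IsAlt) (x : ℙ F V) :
    x.submodule ≤ B.orthogonal x.submodule :=
  submodule_le_orthogonal_submodule.2 (hB x.rep)

lemma exists_point_not_orthogonal (hB : B.SeparatingLeft) (x : ℙ F V) :
    ∃ y : ℙ F V, ¬ y.submodule ≤ B.orthogonal x.submodule := by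
  by_contra! h
  have htop : ⊤ ≤ B.orthogonal x.submodule := le_iff_forall_point_le.2 fun y _ ↦ h y
  rw [orthogonal_submodule_eq_ker] at htop
  exact x.rep_nonzero (hB x.rep fun w ↦ htop Submodule.mem_top)

lemma finrank_inf_orthogonal_submodule_add_one [FiniteDimensional F M]
    (h : ¬ M ≤ B.orthogonal x.submodule) :
    finrank F ↥(M ⊓ B.orthogonal x.submodule) + 1 = finrank F M := by
  rw [orthogonal_submodule_eq_ker] at h ⊢
  have hne : (B x.rep).domRestrict M ≠ 0 := fun h0 ↦ h fun v hv ↦ LinearMap.congr_fun h0 ⟨v, hv⟩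
  have hker : ker ((B x.rep).domRestrict M) = (ker (B x.rep)).comap M.subtype := rfl
  rw [← Dual.finrank_ker_add_one_of_ne_zero hne, hker, ← Submodule.map_comap_subtype,
    Submodule.finrank_map_subtype_eq]

lemma orthogonal_eq_self_of_isotropic [FiniteDimensional F V] (hB : B.Nondegenerate)
    (hiso : M ≤ B.orthogonal M) (hdim : 2 * finrank F M = finrank F V) : B.orthogonal M = M := by
  refine (Submodule.eq_of_le_of_finrank_eq hiso ?_).symm
  rw [LinearMap.BilinForm.finrank_orthogonal hB]
  lia

lemma ne_of_not_le_orthogonal (hB : B.IsAlt) (h : ¬ y.submodule ≤ B.orthogonal x.submodule) :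
    x ≠ y := by
  rintro rfl
  exact h (submodule_le_orthogonal_self hB x)

lemma disjoint_sup_orthogonal_sup (hB : B.IsAlt)
    (h : ¬ y.submodule ≤ B.orthogonal x.submodule) :
    Disjoint (x.submodule ⊔ y.submodule) (B.orthogonal (x.submodule ⊔ y.submodule)) := by
  rw [disjoint_iff_inf_le, le_iff_forall_point_le]
  intro z hz
  have hz_line : z.submodule ≤ x.submodule ⊔ y.submodule := hz.trans inf_le_left
  have hz_perp : z.submodule ≤ B.orthogonal x.submodule ⊓ B.orthogonal y.submodule :=
    orthogonal_sup B _ _ ▸ hz.trans inf_le_right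
  have hxz : x ≠ z := by
    rintro rfl
    exact h ((le_orthogonal_comm hB.isRefl).1 (hz_perp.trans inf_le_right))
  have hline : x.submodule ⊔ y.submodule = x.submodule ⊔ z.submodule :=
    eq_sup_submodule hxz (finrank_sup_submodule_of_ne (ne_of_not_le_orthogonal hB h))
      le_sup_left hz_line
  have hle : x.submodule ⊔ z.submodule ≤ B.orthogonal x.submodule :=
    sup_le (submodule_le_orthogonal_self hB x) (hz_perp.trans inf_le_left)
  exact absurd (le_sup_right.trans (hline.trans_le hle)) h

end Orthogonality

section Quadrangle

variable {F V : Type*} [Field F] [AddCommGroup V] [Module F V] {B : BilinForm F V}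
  {M : Submodule F V} {x y p : ℙ F V}

/-- The lines of the symplectic quadrangle: two-dimensional subspaces that are totally isotropic,
the latter encoded as being contained in their orthogonal complement. -/
def IsIsotropicLine (B : BilinForm F V) (M : Submodule F V) : Prop :=
  finrank F M = 2 ∧ M ≤ B.orthogonal M

/-- The trace of a pair of points: the points collinear with, and distinct from, both of them. -/
def pointTrace (B : BilinForm F V) (x y : ℙ F V) : Set (ℙ F V) :=
  {w | w ≠ x ∧ w ≠ y ∧ B w.rep x.rep = 0 ∧ B w.rep y.rep = 0}

/-- The span of a pair of points: the points collinear with, and distinct from, every point of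
its trace. -/
def pointSpan (B : BilinForm F V) (x y : ℙ F V) : Set (ℙ F V) :=
  {z | ∀ w ∈ pointTrace B x y, z ≠ w ∧ B z.rep w.rep = 0}

lemma isIsotropicLine_iff :
    IsIsotropicLine B M ↔ finrank F M = 2 ∧ ∀ v ∈ M, ∀ w ∈ M, B v w = 0 :=
  and_congr_right' ⟨fun h v hv _ hw ↦ h hw v hv, fun h _ hw v hv ↦ h v hv _ hw⟩

lemma isIsotropicLine_sup (hB : B.IsAlt) (hxp : x ≠ p)
    (h : p.submodule ≤ B.orthogonal x.submodule) :
    IsIsotropicLine B (x.submodule ⊔ p.submodule) := by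
  refine ⟨finrank_sup_submodule_of_ne hxp, ?_⟩
  rw [orthogonal_sup]
  exact sup_le
    (le_inf (submodule_le_orthogonal_self hB x) ((le_orthogonal_comm hB.isRefl).1 h))
    (le_inf h (submodule_le_orthogonal_self hB p))

lemma setOf_isIsotropicLine_through_eq_image (hB : B.IsAlt)
    (h : ¬ y.submodule ≤ B.orthogonal x.submodule) :
    {M | IsIsotropicLine B M ∧ x.submodule ≤ M} =
      (fun p : ℙ F V ↦ x.submodule ⊔ p.submodule) ''
        {p | p.submodule ≤ B.orthogonal (x.submodule ⊔ y.submodule)} := by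
  have hxy : ¬ x.submodule ≤ B.orthogonal y.submodule := fun h' ↦
    h ((le_orthogonal_comm hB.isRefl).1 h')
  have ne_of_le {p : ℙ F V} (hp : p.submodule ≤ B.orthogonal y.submodule) : x ≠ p := by
    rintro rfl
    exact hxy hp
  rw [orthogonal_sup]
  ext M
  constructor
  · rintro ⟨⟨hdim, hiso⟩, hx⟩
    have : FiniteDimensional F M := Module.finite_of_finrank_eq_succ hdim
    have hmeet := finrank_inf_orthogonal_submodule_add_one fun hM ↦ hxy (hx.trans hM)
    obtain ⟨p, hp, -⟩ := existsUnique_point_le (Nat.succ_injective (hmeet.trans hdim))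
    obtain ⟨hpM, hpy⟩ := le_inf_iff.1 hp
    have hpx : p.submodule ≤ B.orthogonal x.submodule :=
      (hpM.trans hiso).trans (LinearMap.BilinForm.orthogonal_le hx)
    exact ⟨p, le_inf hpx hpy, (eq_sup_submodule (ne_of_le hpy) hdim hx hpM).symm⟩
  · rintro ⟨p, hp, rfl⟩
    obtain ⟨hpx, hpy⟩ := le_inf_iff.1 (Set.mem_ofPred.1 hp)
    exact ⟨isIsotropicLine_sup hB (ne_of_le hpy) hpx, le_sup_left⟩

lemma injOn_sup_submodule {N : Submodule F V} (h : Disjoint x.submodule N) :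
    Set.InjOn (fun p : ℙ F V ↦ x.submodule ⊔ p.submodule) {p | p.submodule ≤ N} := by
  have recover {p : ℙ F V} (hp : p.submodule ≤ N) :
      (x.submodule ⊔ p.submodule) ⊓ N = p.submodule := by
    rw [sup_comm, sup_inf_assoc_of_le _ hp, h.eq_bot, sup_bot_eq]
  intro p hp p' hp' heq
  apply Projectivization.submodule_injective
  rw [← recover hp, ← recover hp']
  exact congrArg (· ⊓ N) heq

lemma encard_isIsotropicLine_through (hB : B.IsAlt)
    (h : ¬ y.submodule ≤ B.orthogonal x.submodule) :
    {M | IsIsotropicLine B M ∧ x.submodule ≤ M}.encard =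
      {p : ℙ F V | p.submodule ≤ B.orthogonal (x.submodule ⊔ y.submodule)}.encard := by
  rw [setOf_isIsotropicLine_through_eq_image hB h]
  exact (injOn_sup_submodule
    ((disjoint_sup_orthogonal_sup hB h).mono_left le_sup_left)).encard_image

lemma existsUnique_collinear_point_le (hB : B.IsRefl) (hdim : finrank F M = 2)
    (hself : B.orthogonal M = M) (hx : ¬ x.submodule ≤ M) :
    ∃! y : ℙ F V, y.submodule ≤ M ∧ y ≠ x ∧ B x.rep y.rep = 0 := by
  have : FiniteDimensional F M := Module.finite_of_finrank_eq_succ hdim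
  have hmeet := finrank_inf_orthogonal_submodule_add_one (B := B) (x := x) fun hM ↦
    hx (hself ▸ (le_orthogonal_comm hB).1 hM)
  have collinear_iff (y : ℙ F V) : (y.submodule ≤ M ∧ y ≠ x ∧ B x.rep y.rep = 0) ↔
      y.submodule ≤ M ⊓ B.orthogonal x.submodule := by
    rw [le_inf_iff, submodule_le_orthogonal_submodule]
    exact and_congr_right fun hy ↦ and_iff_right fun hyx ↦ hx (hyx ▸ hy)
  simp only [collinear_iff]
  exact existsUnique_point_le (Nat.succ_injective (hmeet.trans hdim))

lemma mem_pointTrace_iff (hB : B.IsRefl) (h : ¬ y.submodule ≤ B.orthogonal x.submodule)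
    {w : ℙ F V} :
    w ∈ pointTrace B x y ↔ w.submodule ≤ B.orthogonal (x.submodule ⊔ y.submodule) := by
  rw [orthogonal_sup, le_inf_iff, le_orthogonal_comm hB, le_orthogonal_comm hB (N := y.submodule),
    submodule_le_orthogonal_submodule, submodule_le_orthogonal_submodule]
  refine ⟨fun hw ↦ hw.2.2, fun hw ↦ ⟨?_, ?_, hw⟩⟩
  · rintro rfl
    exact h (submodule_le_orthogonal_submodule.2 hw.2)
  · rintro rfl
    exact h (submodule_le_orthogonal_submodule.2 (hB _ _ hw.1))

lemma pointSpan_eq [FiniteDimensional F V] (hnd : B.Nondegenerate) (hB : B.IsAlt)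
    (h : ¬ y.submodule ≤ B.orthogonal x.submodule) :
    pointSpan B x y = {z | z.submodule ≤ x.submodule ⊔ y.submodule} := by
  have mem_iff {z : ℙ F V} : z ∈ pointSpan B x y ↔ ∀ w : ℙ F V,
      w.submodule ≤ B.orthogonal (x.submodule ⊔ y.submodule) → z ≠ w ∧ B z.rep w.rep = 0 := by
    simp only [pointSpan, Set.mem_ofPred_eq, mem_pointTrace_iff hB.isRefl h]
  ext z
  rw [mem_iff, Set.mem_ofPred_eq]
  constructor
  · intro hz
    rw [← LinearMap.BilinForm.orthogonal_orthogonal hnd hB.isRefl (x.submodule ⊔ y.submodule),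
      le_orthogonal_comm hB.isRefl, le_iff_forall_point_le]
    exact fun w hw ↦ submodule_le_orthogonal_submodule.2 (hz w hw).2
  · intro hz w hw
    refine ⟨?_, submodule_le_orthogonal_submodule.1 (hw.trans
      (LinearMap.BilinForm.orthogonal_le hz))⟩
    rintro rfl
    exact (Submodule.isAtom_iff_finrank_eq_one.2 z.finrank_submodule).ne_bot
      (disjoint_self.1 ((disjoint_sup_orthogonal_sup hB h).mono hz hw))

end Quadrangle

lemma ncard_eq_add_one_iff {α : Type*} {s : Set α} {n : ℕ} :
    s.ncard = n + 1 ↔ s.encard = n + 1 :=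
  ENat.toNat_eq_iff n.succ_ne_zero

theorem Wq_is_regular_generalized_quadrangle_general {F V : Type*} [Field F] [AddCommGroup V]
    [Module F V] (hV : finrank F V = 4) (B : BilinForm F V)
    (hnd : ∀ v, (∀ w, B v w = 0) → v = 0) (halt : ∀ v, B v v = 0) :
    (∀ M, IsIsotropicLine B M → {x : ℙ F V | x.submodule ≤ M}.encard = ENat.card F + 1) ∧
    (∀ x : ℙ F V,
      {M | IsIsotropicLine B M ∧ x.submodule ≤ M}.encard = ENat.card F + 1) ∧
    (∀ x y : ℙ F V, x ≠ y → ∀ M₁ M₂, IsIsotropicLine B M₁ → IsIsotropicLine B M₂ →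
      x.submodule ≤ M₁ → y.submodule ≤ M₁ → x.submodule ≤ M₂ → y.submodule ≤ M₂ → M₁ = M₂) ∧
    (∀ (x : ℙ F V) (M), IsIsotropicLine B M → ¬ x.submodule ≤ M →
      ∃! y : ℙ F V, y.submodule ≤ M ∧ y ≠ x ∧ B x.rep y.rep = 0) ∧
    (∀ x y : ℙ F V, x ≠ y → B x.rep y.rep ≠ 0 →
      (pointSpan B x y).encard = ENat.card F + 1) := by
  have : FiniteDimensional F V := Module.finite_of_finrank_eq_succ hV
  have hrefl : B.IsRefl := LinearMap.IsAlt.isRefl halt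
  have hB : B.Nondegenerate := hrefl.nondegenerate_iff_separatingLeft.2 hnd
  refine ⟨fun M hM ↦ encard_points_of_finrank_eq_two hM.1, fun x ↦ ?_, ?_, ?_, ?_⟩
  · obtain ⟨y, hy⟩ := exists_point_not_orthogonal hnd x
    rw [encard_isIsotropicLine_through halt hy]
    apply encard_points_of_finrank_eq_two
    rw [LinearMap.BilinForm.finrank_orthogonal hB, hV,
      finrank_sup_submodule_of_ne (ne_of_not_le_orthogonal halt hy)]
  · intro x y hxy M₁ M₂ h₁ h₂ hx₁ hy₁ hx₂ hy₂
    rw [eq_sup_submodule hxy h₁.1 hx₁ hy₁, eq_sup_submodule hxy h₂.1 hx₂ hy₂]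
  · intro x M hM hx
    refine existsUnique_collinear_point_le hrefl hM.1 ?_ hx
    exact orthogonal_eq_self_of_isotropic hB hM.2 (by rw [hM.1, hV])
  · intro x y hxy hBxy
    rw [pointSpan_eq hB halt (mt submodule_le_orthogonal_submodule.1 hBxy)]
    exact encard_points_of_finrank_eq_two (finrank_sup_submodule_of_ne hxy)

/-- For a finite field `F` with `q` elements and a nondegenerate alternating
bilinear form `B` on `V = F⁴`, the incidence system `W(q)` — points the
points of `ℙ(F, V)`, lines the totally isotropic two-dimensional subspaces
of `V` — is a regular generalized quadrangle of order `(q, q)`: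
(1) every line has `q + 1` points; (2) every point is on `q + 1` lines;
(3) two distinct points are on at most one common line; (4) for every
non-incident point-line pair `(x, ℓ)` there is a unique point of `ℓ`
collinear with `x`; (5) every non-collinear pair of points is regular
(its span has `q + 1` elements).  Here two distinct points are collinear
iff `B` vanishes on their representatives. -/
theorem Wq_is_regular_generalized_quadrangle
    {q : ℕ} (F : Type) [Field F] [Fintype F] (hF : Fintype.card F = q)
    (B : (Fin 4 → F) →ₗ[F] (Fin 4 → F) →ₗ[F] F)
    -- `B` is nondegenerate
    (hnd : ∀ v, (∀ w, B v w = 0) → v = 0)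
    -- `B` is alternating
    (halt : ∀ v, B v v = 0) :
    -- (1) every totally isotropic 2-dimensional subspace carries `q + 1` points
    (∀ M : Submodule F (Fin 4 → F), Module.finrank F M = 2 →
        (∀ v ∈ M, ∀ w ∈ M, B v w = 0) →
        {x : Projectivization F (Fin 4 → F) | x.submodule ≤ M}.ncard = q + 1) ∧
    -- (2) every point lies in `q + 1` totally isotropic 2-dimensional subspaces
    (∀ x : Projectivization F (Fin 4 → F),
        {M : Submodule F (Fin 4 → F) | Module.finrank F M = 2 ∧
          (∀ v ∈ M, ∀ w ∈ M, B v w = 0) ∧ x.submodule ≤ M}.ncard = q + 1) ∧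
    -- (3) two distinct points lie in at most one common totally isotropic
    -- 2-dimensional subspace
    (∀ x y : Projectivization F (Fin 4 → F), x ≠ y →
        ∀ M₁ M₂ : Submodule F (Fin 4 → F),
          Module.finrank F M₁ = 2 → (∀ v ∈ M₁, ∀ w ∈ M₁, B v w = 0) →
          Module.finrank F M₂ = 2 → (∀ v ∈ M₂, ∀ w ∈ M₂, B v w = 0) →
          x.submodule ≤ M₁ → y.submodule ≤ M₁ →
          x.submodule ≤ M₂ → y.submodule ≤ M₂ → M₁ = M₂) ∧
    -- (4) the generalized quadrangle axiom
    (∀ (x : Projectivization F (Fin 4 → F)) (M : Submodule F (Fin 4 → F)),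
        Module.finrank F M = 2 → (∀ v ∈ M, ∀ w ∈ M, B v w = 0) →
        ¬ x.submodule ≤ M →
        ∃! y : Projectivization F (Fin 4 → F),
          y.submodule ≤ M ∧ y ≠ x ∧ B x.rep y.rep = 0) ∧
    -- (5) every non-collinear pair is regular: its span has `q + 1` points
    (∀ x y : Projectivization F (Fin 4 → F), x ≠ y → B x.rep y.rep ≠ 0 →
        {z : Projectivization F (Fin 4 → F) |
          ∀ w ∈ {w : Projectivization F (Fin 4 → F) |
              w ≠ x ∧ w ≠ y ∧ B w.rep x.rep = 0 ∧ B w.rep y.rep = 0},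
            z ≠ w ∧ B z.rep w.rep = 0}.ncard = q + 1) := by
  simpa only [isIsotropicLine_iff, pointSpan, pointTrace, and_imp, and_assoc,
    ncard_eq_add_one_iff, ← hF, ENat.card_eq_coe_fintype_card] using
    Wq_is_regular_generalized_quadrangle_general (finrank_fin_fun F) B hnd halt
end
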